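/- arXiv:2410.02418 — 2 statements merged into one kernel-verified Lean document; each statement's English description precedes it below -/
import Mathlib

section
/- Let β = i − 1 and D = {0, 1, −1, i, −i}, and for x ∈ ℤ[i], k ∈ ℕ let r(x, k) be the number of normalized (β, D)-representations of x with exactly k nonzero digits. Then r(1, k+1) = 3^k for every k ∈ ℕ. -/
/-!
Each digit is `0` or a unit, and `β` is not a unit, so `β` divides the value of a string exactly
when the lowest digit is `0`. Stripping a lowest digit `0` and rescaling all digits by a unit `u`
therefore give `r(βx, k) = r(x, k)` and `r(ux, k) = r(x, k)`. A representation of `1` has one of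
the four units as lowest digit, and

`1 = 1 + β · 0 = -1 + β · βi = i + β · (-1) = -i + β · (-i)`,

where three of the four quotients by `β` are units up to a power of `β`. Hence
`r(1, k + 1) = r(0, k) + 3 r(1, k)`, while `r(0, 0) = 1`, `r(0, k + 1) = 0` and `r(1, 0) = 0`.
-/

open Matrix

noncomputable section

/-- The imaginary unit `i` in the Gaussian integers. -/
def gI : GaussianInt := ⟨0, 1⟩

/-- The base `β = i - 1`. -/
def gβ : GaussianInt := ⟨-1, 1⟩

/-- The digit set `D = {0, 1, -1, i, -i}`. -/
def gD : Set GaussianInt := {0, 1, -1, gI, -gI}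

/-- Value of a digit string `d_{n-1} ⋯ d_0`, given as a list with the least
significant digit first: `gval [d_0, d_1, …, d_{n-1}] = Σ d_j β^j`. -/
def gval (l : List GaussianInt) : GaussianInt :=
  l.foldr (fun d acc => d + gβ * acc) 0

/-- `l` (least significant digit first) is a `(β, D)`-representation of `x`. -/
def gIsRep (x : GaussianInt) (l : List GaussianInt) : Prop :=
  (∀ d ∈ l, d ∈ gD) ∧ gval l = x

/-- A representation is normalized if it is empty or its leading digit
(the last entry of the LSD-first list) is nonzero. -/
def gNormalized (l : List GaussianInt) : Prop := l.getLast? ≠ some 0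

/-- Number of nonzero digits (Hamming weight). -/
def gweight (l : List GaussianInt) : ℕ := (l.filter (fun d => d ≠ 0)).length

/-- `gr x k` : number of normalized representations of `x` with exactly `k`
nonzero digits. -/
def gr (x : GaussianInt) (k : ℕ) : ℕ :=
  Nat.card {l : List GaussianInt // gIsRep x l ∧ gNormalized l ∧ gweight l = k}

/-- The normalized representations of `x` with exactly `k` nonzero digits, the set counted by
`gr x k`. Recursions are stated for its `Set.encard`, which needs no finiteness. -/
def gReps (x : GaussianInt) (k : ℕ) : Set (List GaussianInt) :=
  {l | gIsRep x l ∧ gNormalized l ∧ gweight l = k}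

theorem gr_eq_toNat_encard (x : GaussianInt) (k : ℕ) : gr x k = (gReps x k).encard.toNat :=
  Set.ncard_def _

section

variable {d u v x : GaussianInt} {k : ℕ} {l : List GaussianInt}

theorem gI_mul_gI : gI * gI = -1 := by decide

theorem gβ_eq_gI_sub_one : gβ = gI - 1 := by decide

theorem gβ_ne_zero : gβ ≠ 0 := by decide

theorem not_isUnit_gβ : ¬IsUnit gβ := by
  rw [← Zsqrtd.norm_eq_one_iff]
  decide

theorem isUnit_gI : IsUnit gI :=
  .of_mul_eq_one (-gI) (by rw [mul_neg, gI_mul_gI, neg_neg])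

theorem isUnit_gaussianInt_iff : IsUnit u ↔ u = 1 ∨ u = -1 ∨ u = gI ∨ u = -gI := by
  constructor
  · intro hu
    have hnorm : u.re * u.re + u.im * u.im = 1 := by
      have := (Zsqrtd.norm_eq_one_iff' (by norm_num) u).2 hu
      rw [Zsqrtd.norm_def] at this
      linarith
    obtain ⟨a, b⟩ := u
    have ha : -1 ≤ a ∧ a ≤ 1 := by constructor <;> nlinarith
    have hb : -1 ≤ b ∧ b ≤ 1 := by constructor <;> nlinarith
    obtain ⟨ha₁, ha₂⟩ := ha
    obtain ⟨hb₁, hb₂⟩ := hb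
    interval_cases a <;> interval_cases b <;> revert hnorm <;> decide
  · rintro (rfl | rfl | rfl | rfl)
    exacts [isUnit_one, isUnit_one.neg, isUnit_gI, isUnit_gI.neg]

theorem mem_gD_iff : d ∈ gD ↔ d = 0 ∨ IsUnit d := by
  rw [isUnit_gaussianInt_iff]
  rfl

theorem gβ_dvd_digit_iff_eq_zero (hd : d ∈ gD) : gβ ∣ d ↔ d = 0 := by
  refine ⟨fun hdvd => ?_, fun h => h ▸ dvd_zero gβ⟩
  exact (mem_gD_iff.1 hd).resolve_right fun hunit => not_isUnit_gβ (isUnit_of_dvd_unit hdvd hunit)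

theorem gval_cons (d : GaussianInt) (l : List GaussianInt) : gval (d :: l) = d + gβ * gval l :=
  rfl

theorem gval_map_mul (c : GaussianInt) (l : List GaussianInt) :
    gval (l.map (c * ·)) = c * gval l := by
  induction l with
  | nil => simp [gval]
  | cons d l ih => rw [List.map_cons, gval_cons, gval_cons, ih]; ring

theorem nil_mem_gReps : [] ∈ gReps x k ↔ x = 0 ∧ k = 0 := by
  simp [gReps, gIsRep, gNormalized, gweight, gval, eq_comm]

theorem zero_cons_mem_gReps (hx : x = gβ * v) :
    0 :: l ∈ gReps x k ↔ l ≠ [] ∧ l ∈ gReps v k := by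
  subst hx
  have hzero : (0 : GaussianInt) ∈ gD := mem_gD_iff.2 (.inl rfl)
  cases l <;> simp [gReps, gIsRep, gNormalized, gweight, gval_cons 0, gβ_ne_zero, hzero]

theorem unit_cons_mem_gReps (hd : IsUnit d) (hx : x = d + gβ * v) :
    d :: l ∈ gReps x (k + 1) ↔ l ∈ gReps v k := by
  subst hx
  have hmem : d ∈ gD := mem_gD_iff.2 (.inr hd)
  have hnorm : gNormalized (d :: l) ↔ gNormalized l := by
    cases l <;> simp [gNormalized, hd.ne_zero]
  simp [gReps, hnorm, gIsRep, gval_cons, gβ_ne_zero, gweight, hd.ne_zero, hmem]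

theorem head_mem_gD_of_mem_gReps (h : d :: l ∈ gReps x k) : d ∈ gD :=
  h.1.1 d List.mem_cons_self

theorem gβ_dvd_iff_head_eq_zero (h : d :: l ∈ gReps x k) : gβ ∣ x ↔ d = 0 := by
  rw [← h.1.2, gval_cons, dvd_add_left (dvd_mul_right gβ _),
    gβ_dvd_digit_iff_eq_zero (head_mem_gD_of_mem_gReps h)]

theorem eq_nil_of_mem_gReps_zero_left (h : l ∈ gReps 0 k) : l = [] := by
  induction l with
  | nil => rfl
  | cons d l ih =>
    obtain rfl := (gβ_dvd_iff_head_eq_zero h).1 (dvd_zero gβ)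
    obtain ⟨hne, hl⟩ := (zero_cons_mem_gReps (mul_zero gβ).symm).1 h
    exact absurd (ih hl) hne

theorem eq_nil_of_mem_gReps_zero_right (h : l ∈ gReps x 0) : l = [] := by
  obtain ⟨-, hnorm, hweight⟩ := h
  have hdigits : ∀ d ∈ l, d = 0 := by simpa [gweight] using hweight
  by_contra hl
  apply hnorm
  rw [List.getLast?_eq_some_getLast hl, hdigits _ (List.getLast_mem hl)]

theorem gReps_zero_zero : gReps 0 0 = {[]} := by
  ext l
  refine ⟨eq_nil_of_mem_gReps_zero_left, ?_⟩
  rintro rfl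
  exact nil_mem_gReps.2 ⟨rfl, rfl⟩

theorem gReps_zero_succ (k : ℕ) : gReps 0 (k + 1) = ∅ := by
  refine Set.eq_empty_of_forall_notMem fun l h => ?_
  obtain rfl := eq_nil_of_mem_gReps_zero_left h
  exact k.succ_ne_zero (nil_mem_gReps.1 h).2

theorem gReps_zero_right (hx : x ≠ 0) : gReps x 0 = ∅ := by
  refine Set.eq_empty_of_forall_notMem fun l h => ?_
  obtain rfl := eq_nil_of_mem_gReps_zero_right h
  exact hx (nil_mem_gReps.1 h).1

theorem gReps_gβ_mul (hv : v ≠ 0) (k : ℕ) : gReps (gβ * v) k = List.cons 0 '' gReps v k := by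
  ext l
  constructor
  · intro h
    cases l with
    | nil => exact absurd (nil_mem_gReps.1 h).1 (mul_ne_zero gβ_ne_zero hv)
    | cons d l =>
      obtain rfl := (gβ_dvd_iff_head_eq_zero h).1 (dvd_mul_right gβ v)
      exact ⟨l, ((zero_cons_mem_gReps rfl).1 h).2, rfl⟩
  · rintro ⟨l, hl, rfl⟩
    refine (zero_cons_mem_gReps rfl).2 ⟨?_, hl⟩
    rintro rfl
    exact hv (nil_mem_gReps.1 hl).1

theorem encard_gReps_gβ_mul (x : GaussianInt) (k : ℕ) :
    (gReps (gβ * x) k).encard = (gReps x k).encard := by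
  obtain rfl | hx := eq_or_ne x 0
  · rw [mul_zero]
  · rw [gReps_gβ_mul hx, List.cons_injective.encard_image]

theorem map_mul_mem_gReps (hu : IsUnit u) (h : l ∈ gReps x k) :
    l.map (u * ·) ∈ gReps (u * x) k := by
  obtain ⟨⟨hdigits, hval⟩, hnorm, hweight⟩ := h
  refine ⟨⟨?_, by rw [gval_map_mul, hval]⟩, ?_, ?_⟩
  · simp only [List.mem_map, forall_exists_index, and_imp, forall_apply_eq_imp_iff₂, mem_gD_iff]
    intro d hd
    exact (mem_gD_iff.1 (hdigits d hd)).imp (mul_eq_zero_of_right u) hu.mul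
  · simpa [gNormalized, hu.ne_zero] using hnorm
  · simpa [gweight, List.filter_map, Function.comp_def, hu.ne_zero] using hweight

theorem encard_gReps_le_encard_gReps_unit_mul (hu : IsUnit u) (x : GaussianInt) (k : ℕ) :
    (gReps x k).encard ≤ (gReps (u * x) k).encard :=
  Set.encard_le_encard_of_injOn (fun _ => map_mul_mem_gReps hu)
    (List.map_injective_iff.2 (mul_right_injective₀ hu.ne_zero)).injOn

theorem encard_gReps_unit_mul (hu : IsUnit u) (x : GaussianInt) (k : ℕ) :
    (gReps (u * x) k).encard = (gReps x k).encard := by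
  obtain ⟨w, hwu⟩ := hu.exists_left_inv
  refine le_antisymm ?_ (encard_gReps_le_encard_gReps_unit_mul hu x k)
  simpa [← mul_assoc, hwu] using
    encard_gReps_le_encard_gReps_unit_mul (.of_mul_eq_one u hwu) (u * x) k

theorem encard_gReps_gβ_pow_mul (n : ℕ) (x : GaussianInt) (k : ℕ) :
    (gReps (gβ ^ n * x) k).encard = (gReps x k).encard := by
  induction n with
  | zero => rw [pow_zero, one_mul]
  | succ n ih => rw [pow_succ', mul_assoc, encard_gReps_gβ_mul, ih]

theorem encard_gReps_of_isUnit (hu : IsUnit u) (k : ℕ) :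
    (gReps u k).encard = (gReps 1 k).encard := by
  simpa using encard_gReps_unit_mul hu 1 k

theorem isUnit_head_of_mem_gReps (hx : ¬gβ ∣ x) (h : d :: l ∈ gReps x k) : IsUnit d :=
  (mem_gD_iff.1 (head_mem_gD_of_mem_gReps h)).resolve_left fun hd =>
    hx ((gβ_dvd_iff_head_eq_zero h).2 hd)

theorem not_gβ_dvd_one_add_gβ_mul (v : GaussianInt) : ¬gβ ∣ 1 + gβ * v := by
  rw [dvd_add_left (dvd_mul_right gβ v), ← isUnit_iff_dvd_one]
  exact not_isUnit_gβ

theorem gReps_one_add_gβ_mul (v : GaussianInt) (k : ℕ) :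
    gReps (1 + gβ * v) (k + 1) =
      List.cons 1 '' gReps v k ∪ List.cons (-1) '' gReps (v + gβ * gI) k ∪
        List.cons gI '' gReps (v - 1) k ∪ List.cons (-gI) '' gReps (v - gI) k := by
  have hneg_one : 1 + gβ * v = -1 + gβ * (v + gβ * gI) := by
    rw [gβ_eq_gI_sub_one]
    linear_combination (2 - gI) * gI_mul_gI
  have hI : 1 + gβ * v = gI + gβ * (v - 1) := by
    rw [gβ_eq_gI_sub_one]
    ring
  have hneg_I : 1 + gβ * v = -gI + gβ * (v - gI) := by
    rw [gβ_eq_gI_sub_one]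
    linear_combination gI_mul_gI
  ext l
  constructor
  · intro h
    cases l with
    | nil => exact absurd (nil_mem_gReps.1 h).2 k.succ_ne_zero
    | cons d l =>
      have hd := isUnit_head_of_mem_gReps (not_gβ_dvd_one_add_gβ_mul v) h
      rcases isUnit_gaussianInt_iff.1 hd with rfl | rfl | rfl | rfl
      · exact .inl (.inl (.inl ⟨l, (unit_cons_mem_gReps hd rfl).1 h, rfl⟩))
      · exact .inl (.inl (.inr ⟨l, (unit_cons_mem_gReps hd hneg_one).1 h, rfl⟩))
      · exact .inl (.inr ⟨l, (unit_cons_mem_gReps hd hI).1 h, rfl⟩)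
      · exact .inr ⟨l, (unit_cons_mem_gReps hd hneg_I).1 h, rfl⟩
  · rintro (((⟨l, hl, rfl⟩ | ⟨l, hl, rfl⟩) | ⟨l, hl, rfl⟩) | ⟨l, hl, rfl⟩)
    · exact (unit_cons_mem_gReps isUnit_one rfl).2 hl
    · exact (unit_cons_mem_gReps isUnit_one.neg hneg_one).2 hl
    · exact (unit_cons_mem_gReps isUnit_gI hI).2 hl
    · exact (unit_cons_mem_gReps isUnit_gI.neg hneg_I).2 hl

theorem disjoint_image_cons {α : Type*} {a b : α} (hab : a ≠ b) (s t : Set (List α)) :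
    Disjoint (List.cons a '' s) (List.cons b '' t) := by
  rw [Set.disjoint_left]
  rintro _ ⟨l, -, rfl⟩ ⟨m, -, h⟩
  exact hab (List.cons.inj h).1.symm

theorem encard_gReps_one_add_gβ_mul (v : GaussianInt) (k : ℕ) :
    (gReps (1 + gβ * v) (k + 1)).encard =
      (gReps v k).encard + (gReps (v + gβ * gI) k).encard + (gReps (v - 1) k).encard +
        (gReps (v - gI) k).encard := by
  rw [gReps_one_add_gβ_mul, Set.encard_union_eq, Set.encard_union_eq, Set.encard_union_eq]
  · simp only [List.cons_injective.encard_image]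
  · exact disjoint_image_cons (by decide) _ _
  · rw [Set.disjoint_union_left]
    constructor <;> exact disjoint_image_cons (by decide) _ _
  · rw [Set.disjoint_union_left, Set.disjoint_union_left]
    refine ⟨⟨?_, ?_⟩, ?_⟩ <;> exact disjoint_image_cons (by decide) _ _

theorem encard_gReps_one_succ (k : ℕ) :
    (gReps 1 (k + 1)).encard = (gReps 0 k).encard + 3 * (gReps 1 k).encard := by
  have h := encard_gReps_one_add_gβ_mul 0 k
  rw [mul_zero, add_zero, zero_add, zero_sub, zero_sub, encard_gReps_gβ_mul,
    encard_gReps_of_isUnit isUnit_gI, encard_gReps_of_isUnit isUnit_one.neg,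
    encard_gReps_of_isUnit isUnit_gI.neg] at h
  rw [h]
  ring

theorem encard_gReps_one_succ_eq_three_pow (k : ℕ) : (gReps 1 (k + 1)).encard = 3 ^ k := by
  induction k with
  | zero => simp [encard_gReps_one_succ, gReps_zero_zero, gReps_zero_right]
  | succ k ih =>
    rw [encard_gReps_one_succ, gReps_zero_succ, Set.encard_empty, zero_add, ih, pow_succ']

end

theorem stmt4_general {u : GaussianInt} (hu : IsUnit u) (n k : ℕ) :
    gr (gβ ^ n * u) (k + 1) = 3 ^ k := by
  rw [gr_eq_toNat_encard, encard_gReps_gβ_pow_mul, encard_gReps_of_isUnit hu,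
    encard_gReps_one_succ_eq_three_pow]
  norm_cast

/-- `r(1, k+1) = 3^k` for every `k ∈ ℕ`. -/
theorem stmt4 (k : ℕ) : gr 1 (k + 1) = 3 ^ k := by
  simpa using stmt4_general isUnit_one 0 k
end
end

section
/- Let β = i − 1 and D = {0, 1, −1, i, −i}. Every nonzero Gaussian integer x ∈ ℤ[i] has infinitely many normalized (β, D)-representations. -/
open Matrix

noncomputable section

/-!
The digits are exactly the Gaussian integers of norm at most `1`. If `x` is not a digit, some digit
`d ∈ {0, 1, -1}` makes `x - d` divisible by `β` with `N (x - d) < 2 * N x`; as `N β = 2`, the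
quotient has smaller norm than `x`, so splitting off least significant digits reduces every `x ≠ 0`
to a nonzero digit `u`. Since `u = u * i + β * (-u)` and `-u` is again a nonzero digit, the leading
digit can be expanded without end, which yields representations of unbounded length.
-/

/-- The set of normalized `(β, D)`-representations of `x`, least significant digit first. -/
def normalizedReps (x : GaussianInt) : Set (List GaussianInt) :=
  {l | gIsRep x l ∧ gNormalized l}

theorem norm_eq_sq_add_sq (x : GaussianInt) : x.norm = x.re ^ 2 + x.im ^ 2 := by
  rw [Zsqrtd.norm_def]
  ring

theorem norm_gI : gI.norm = 1 := rfl

theorem norm_gβ : gβ.norm = 2 := rfl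

theorem mem_gD_iff_norm_le_one {x : GaussianInt} : x ∈ gD ↔ x.norm ≤ 1 := by
  constructor
  · rintro (rfl | rfl | rfl | rfl | rfl) <;> decide
  · intro hx
    rw [norm_eq_sq_add_sq] at hx
    obtain ⟨a, b⟩ := x
    obtain ⟨ha, ha'⟩ : -1 ≤ a ∧ a ≤ 1 := by constructor <;> nlinarith
    obtain ⟨hb, hb'⟩ : -1 ≤ b ∧ b ≤ 1 := by constructor <;> nlinarith
    interval_cases a <;> interval_cases b <;> simp [gD, gI, Zsqrtd.ext_iff] at hx ⊢

theorem zero_mem_gD : (0 : GaussianInt) ∈ gD := by simp [gD]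

theorem one_mem_gD : (1 : GaussianInt) ∈ gD := by simp [gD]

theorem neg_mem_gD {d : GaussianInt} (hd : d ∈ gD) : -d ∈ gD := by
  rwa [mem_gD_iff_norm_le_one, Zsqrtd.norm_neg, ← mem_gD_iff_norm_le_one]

theorem mul_gI_mem_gD {d : GaussianInt} (hd : d ∈ gD) : d * gI ∈ gD := by
  rwa [mem_gD_iff_norm_le_one, Zsqrtd.norm_mul, norm_gI, mul_one, ← mem_gD_iff_norm_le_one]

theorem gβ_dvd_of_even_re_add_im {x : GaussianInt} (hx : Even (x.re + x.im)) : gβ ∣ x := by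
  obtain ⟨k, hk⟩ := hx
  refine ⟨⟨x.im - k, -k⟩, ?_⟩
  ext
  · simp only [gβ, Zsqrtd.re_mul]
    linarith
  · simp only [gβ, Zsqrtd.im_mul]
    linarith

theorem norm_sub_one_le {x : GaussianInt} (hx : 0 ≤ x.re) : (x - 1).norm ≤ x.norm + 1 := by
  simp only [norm_eq_sq_add_sq, Zsqrtd.re_sub, Zsqrtd.im_sub, Zsqrtd.re_one, Zsqrtd.im_one]
  linarith

theorem norm_add_one_le {x : GaussianInt} (hx : x.re ≤ 0) : (x + 1).norm ≤ x.norm + 1 := by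
  simp only [norm_eq_sq_add_sq, Zsqrtd.re_add, Zsqrtd.im_add, Zsqrtd.re_one, Zsqrtd.im_one]
  linarith

theorem exists_mem_gD_dvd_sub_and_norm_sub_lt {x : GaussianInt} (hx : x ∉ gD) :
    ∃ d ∈ gD, gβ ∣ x - d ∧ (x - d).norm < 2 * x.norm := by
  have one_lt_norm : 1 < x.norm := not_le.1 (mt mem_gD_iff_norm_le_one.2 hx)
  rcases Int.even_or_odd (x.re + x.im) with even | odd
  · refine ⟨0, zero_mem_gD, ?_, ?_⟩
    · simpa only [sub_zero] using gβ_dvd_of_even_re_add_im even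
    · rw [sub_zero]
      linarith
  · rcases le_total 0 x.re with nonneg | nonpos
    · refine ⟨1, one_mem_gD, gβ_dvd_of_even_re_add_im ?_, ?_⟩
      · simpa [sub_add_eq_add_sub] using odd.sub_odd odd_one
      · linarith [norm_sub_one_le nonneg]
    · refine ⟨-1, neg_mem_gD one_mem_gD, gβ_dvd_of_even_re_add_im ?_, ?_⟩
      · simpa [add_right_comm] using odd.add_odd odd_one
      · rw [sub_neg_eq_add]
        linarith [norm_add_one_le nonpos]

theorem exists_eq_digit_add_gβ_mul {x : GaussianInt} (hx : x ∉ gD) :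
    ∃ d ∈ gD, ∃ y ≠ 0, x = d + gβ * y ∧ y.norm < x.norm := by
  obtain ⟨d, hd, ⟨y, hy⟩, hlt⟩ := exists_mem_gD_dvd_sub_and_norm_sub_lt hx
  have eq_add : x = d + gβ * y := by rw [← hy, add_sub_cancel]
  refine ⟨d, hd, y, ?_, eq_add, ?_⟩
  · rintro rfl
    exact hx (by simpa [eq_add] using hd)
  · rw [hy, Zsqrtd.norm_mul, norm_gβ] at hlt
    linarith

theorem digit_induction {P : GaussianInt → Prop} (digit : ∀ u ∈ gD, u ≠ 0 → P u)
    (add_gβ_mul : ∀ d ∈ gD, ∀ y ≠ 0, P y → P (d + gβ * y)) (x : GaussianInt) (hx : x ≠ 0) :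
    P x := by
  induction x using (measure fun x : GaussianInt => x.norm.natAbs).wf.induction with
  | _ x ih =>
    by_cases hxD : x ∈ gD
    · exact digit x hxD hx
    · obtain ⟨d, hd, y, hy, eq_add, hlt⟩ := exists_eq_digit_add_gβ_mul hxD
      have natAbs_lt : y.norm.natAbs < x.norm.natAbs :=
        Int.natAbs_lt_natAbs_of_nonneg_of_lt (GaussianInt.norm_nonneg y) hlt
      rw [eq_add]
      exact add_gβ_mul d hd y hy (ih y natAbs_lt hy)

theorem singleton_mem_normalizedReps {u : GaussianInt} (hu : u ∈ gD) (hu0 : u ≠ 0) :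
    [u] ∈ normalizedReps u := by
  simp [normalizedReps, gIsRep, gNormalized, gval, hu, hu0]

theorem cons_mem_normalizedReps {d y : GaussianInt} {l : List GaussianInt} (hd : d ∈ gD)
    (hy : y ≠ 0) (hl : l ∈ normalizedReps y) : d :: l ∈ normalizedReps (d + gβ * y) := by
  obtain ⟨⟨digits, rfl⟩, normalized⟩ := hl
  have ne_nil : l ≠ [] := by
    rintro rfl
    exact hy rfl
  refine ⟨⟨List.forall_mem_cons.2 ⟨hd, digits⟩, rfl⟩, ?_⟩
  rwa [gNormalized, List.getLast?_cons_of_ne_nil ne_nil]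

theorem mul_gI_add_gβ_mul_neg (u : GaussianInt) : u * gI + gβ * -u = u := by
  ext <;> simp [gI, gβ]

theorem exists_mem_normalizedReps_length_eq {u : GaussianInt} (hu : u ∈ gD) (hu0 : u ≠ 0) (n : ℕ) :
    ∃ l ∈ normalizedReps u, l.length = n + 1 := by
  induction n generalizing u with
  | zero => exact ⟨[u], singleton_mem_normalizedReps hu hu0, rfl⟩
  | succ n ih =>
    have neg_ne : -u ≠ 0 := neg_ne_zero.2 hu0
    obtain ⟨l, hl, hlen⟩ := ih (neg_mem_gD hu) neg_ne
    have hcons := cons_mem_normalizedReps (mul_gI_mem_gD hu) neg_ne hl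
    rw [mul_gI_add_gβ_mul_neg] at hcons
    exact ⟨u * gI :: l, hcons, congrArg (· + 1) hlen⟩

theorem infinite_normalizedReps_of_mem_gD {u : GaussianInt} (hu : u ∈ gD) (hu0 : u ≠ 0) :
    (normalizedReps u).Infinite := by
  choose rep mem length_eq using exists_mem_normalizedReps_length_eq hu hu0
  refine Set.infinite_of_injective_forall_mem (fun m n h => ?_) mem
  simpa only [length_eq, Nat.add_right_cancel_iff] using congrArg List.length h

theorem infinite_normalizedReps_add_gβ_mul {d y : GaussianInt} (hd : d ∈ gD) (hy : y ≠ 0)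
    (h : (normalizedReps y).Infinite) : (normalizedReps (d + gβ * y)).Infinite :=
  Set.infinite_of_injOn_mapsTo List.cons_injective.injOn
    (fun _ hl => cons_mem_normalizedReps hd hy hl) h

/-- Every nonzero Gaussian integer has infinitely many normalized
`(β, D)`-representations. -/
theorem stmt5 (x : GaussianInt) (hx : x ≠ 0) :
    {l : List GaussianInt | gIsRep x l ∧ gNormalized l}.Infinite :=
  digit_induction (P := fun x => (normalizedReps x).Infinite)
    (fun _ => infinite_normalizedReps_of_mem_gD)
    (fun _ hd _ hy => infinite_normalizedReps_add_gβ_mul hd hy) x hx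
end
end
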